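/- Suppose f(0) ≠ 0 and NP(f) consists of a single edge L, of slope −ρ. Then f is NP-regular if and only if every proper cluster s ∈ Σ_f with |s| > |ρ|_p satisfies d_s = ρ. -/

import Mathlib

open Polynomial
open scoped Classical

namespace ClusterPicture

variable {K Kbar : Type*} [Field K] [Field Kbar] [Algebra K Kbar]

lemma zero_lt_top' : (0 : WithTop ℚ) < ⊤ := by
  simp

lemma withTop_add_pos {a b : WithTop ℚ} (ha : 0 ≤ a) (hb : 0 < b) : 0 < a + b := by
  rcases eq_or_ne a ⊤ with h | h
  · subst h; rw [top_add]; exact zero_lt_top'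
  · lift a to ℚ using h
    rcases eq_or_ne b ⊤ with h' | h'
    · subst h'; rw [add_top]; exact zero_lt_top'
    · lift b to ℚ using h'
      have ha' : (0 : ℚ) ≤ a := by exact_mod_cast ha
      have hb' : (0 : ℚ) < b := by exact_mod_cast hb
      exact_mod_cast add_pos_of_nonneg_of_pos ha' hb'

/-- The setting of the paper: `K` is a complete discretely valued field, with valuation `v`
normalised so that `v(K^×) = ℤ`, `Kbar` is an algebraic closure of `K`, and `v` is (the unique)
extension of the valuation to a `ℚ ∪ {∞}`-valued valuation on `Kbar`. -/
structure Setup (K Kbar : Type*) [Field K] [Field Kbar] [Algebra K Kbar] : Type _ where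
  /-- the valuation on the algebraic closure -/
  v : Kbar → WithTop ℚ
  v_top_iff : ∀ x : Kbar, v x = ⊤ ↔ x = 0
  v_one : v 1 = 0
  v_neg : ∀ x : Kbar, v (-x) = v x
  v_mul : ∀ x y : Kbar, v (x * y) = v x + v y
  v_add : ∀ x y : Kbar, min (v x) (v y) ≤ v (x + y)
  /-- the valuation is normalised: nonzero elements of `K` have integer valuation -/
  v_base_int : ∀ x : K, x ≠ 0 → ∃ n : ℤ, v (algebraMap K Kbar x) = ((n : ℚ) : WithTop ℚ)
  /-- the valuation is surjective onto `ℤ` on `K^×`: there is a uniformiser -/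
  exists_uniformiser : ∃ π : K, v (algebraMap K Kbar π) = ((1 : ℚ) : WithTop ℚ)
  /-- `Kbar` is an algebraic closure of `K` -/
  algClosed : IsAlgClosed Kbar
  algebraic : Algebra.IsAlgebraic K Kbar
  /-- `K` is complete with respect to the valuation -/
  complete : ∀ a : ℕ → K,
    (∀ q : ℚ, ∃ N : ℕ, ∀ m, N ≤ m → ∀ n, N ≤ n →
      ((q : ℚ) : WithTop ℚ) ≤ v (algebraMap K Kbar (a m - a n))) →
    ∃ b : K, ∀ q : ℚ, ∃ N : ℕ, ∀ n, N ≤ n →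
      ((q : ℚ) : WithTop ℚ) ≤ v (algebraMap K Kbar (a n - b))

/-- Valuation of an element of the base field `K`. -/
def Setup.vK (S : Setup K Kbar) (x : K) : WithTop ℚ := S.v (algebraMap K Kbar x)

/-- The finite set of roots of `f` in the algebraic closure `Kbar`. -/
noncomputable def rootFinset (f : K[X]) : Finset Kbar :=
  (f.map (algebraMap K Kbar)).roots.toFinset

/-- A cluster for `f`: a nonempty subset of the set of roots of `f` cut out by a `v`-adic disc. -/
def IsCluster (S : Setup K Kbar) (f : K[X]) (s : Finset Kbar) : Prop :=
  s.Nonempty ∧ ∃ (z : Kbar) (δ : ℚ),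
    s = (rootFinset f).filter fun r => ((δ : ℚ) : WithTop ℚ) ≤ S.v (r - z)

/-- The depth `d_s = min_{r,r' ∈ s} v (r - r')` of a cluster. -/
noncomputable def depth (S : Setup K Kbar) (s : Finset Kbar) : WithTop ℚ :=
  s.inf fun r => s.inf fun r' => S.v (r - r')

/-- `min_{r ∈ s} v (r - z)`, for `z ∈ Kbar`. -/
noncomputable def dmin (S : Setup K Kbar) (s : Finset Kbar) (z : Kbar) : WithTop ℚ :=
  s.inf fun r => S.v (r - z)

/-- `min_{r ∈ s} v (r - w)`, for `w ∈ K`. -/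
noncomputable def dminK (S : Setup K Kbar) (s : Finset Kbar) (w : K) : WithTop ℚ :=
  dmin S s (algebraMap K Kbar w)

/-- `w ∈ K` is a rational centre of `s` if it maximises `min_{r ∈ s} v (r - w)`.
For a proper cluster `s` with rational centre `w`, the radius `ρ_s` is `dminK S s w`. -/
def IsRationalCentre (S : Setup K Kbar) (s : Finset Kbar) (w : K) : Prop :=
  ∀ w' : K, dminK S s w' ≤ dminK S s w

/-- A rational cluster: a cluster cut out by a disc with centre in `K`. -/
def IsRationalCluster (S : Setup K Kbar) (f : K[X]) (s : Finset Kbar) : Prop :=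
  s.Nonempty ∧ ∃ (w : K) (δ : ℚ),
    s = (rootFinset f).filter fun r => ((δ : ℚ) : WithTop ℚ) ≤ S.v (r - algebraMap K Kbar w)

/-- A cluster centred at `w ∈ K`. -/
def IsClusterCentredAt (S : Setup K Kbar) (f : K[X]) (w : K) (s : Finset Kbar) : Prop :=
  s.Nonempty ∧ ∃ δ : ℚ,
    s = (rootFinset f).filter fun r => ((δ : ℚ) : WithTop ℚ) ≤ S.v (r - algebraMap K Kbar w)

/-- The cluster picture of `f` is almost rational: every proper cluster `s` with
`|s| > |ρ_s|_p` satisfies `d_s = ρ_s`. -/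
def AlmostRational (S : Setup K Kbar) (f : K[X]) (p : ℕ) : Prop :=
  ∀ s : Finset Kbar, IsCluster S f s → 1 < s.card →
    ∀ (w : K) (ρ : ℚ), IsRationalCentre S s w → dminK S s w = ((ρ : ℚ) : WithTop ℚ) →
      padicNorm p ρ < (s.card : ℚ) → depth S s = ((ρ : ℚ) : WithTop ℚ)

/-- The slope of the `j`-th edge of the polygon with vertices `(i_j, c_j)`. -/
def NPslope {s : ℕ} (i : Fin (s + 1) → ℕ) (c : Fin (s + 1) → ℚ) (j : Fin s) : ℚ :=
  (c j.succ - c j.castSucc) / ((i j.succ : ℚ) - (i j.castSucc : ℚ))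

/-- `(i_0, c_0), …, (i_s, c_s)` are the vertices of the Newton polygon of `f`:
the points `(i_j, c_j)` are among the points `(m, v(a_m))`, the first and last vertices lie
above the trailing and leading coefficients, the slopes of consecutive edges strictly
increase, and every point `(m, v(a_m))` lies on or above (the line spanned by) every edge. -/
structure IsNPVertices (S : Setup K Kbar) (f : K[X]) (s : ℕ)
    (i : Fin (s + 1) → ℕ) (c : Fin (s + 1) → ℚ) : Prop where
  mono : StrictMono i
  first : i 0 = f.natTrailingDegree
  last : i (Fin.last s) = f.natDegree
  vert : ∀ j, S.vK (f.coeff (i j)) = ((c j : ℚ) : WithTop ℚ)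
  slope_mono : StrictMono (NPslope i c)
  support : ∀ (j : Fin s) (m : ℕ) (q : ℚ), S.vK (f.coeff m) = ((q : ℚ) : WithTop ℚ) →
    (c j.succ - c j.castSucc) * ((m : ℚ) - (i j.castSucc : ℚ)) ≤
      (q - c j.castSucc) * ((i j.succ : ℚ) - (i j.castSucc : ℚ))

/-- The valuation ring of `Kbar`. -/
def intRing (S : Setup K Kbar) : Subring Kbar where
  carrier := {x : Kbar | (0 : WithTop ℚ) ≤ S.v x}
  zero_mem' := by
    simp only [Set.mem_setOf_eq, (S.v_top_iff 0).mpr rfl]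
    exact le_top
  one_mem' := by
    simp only [Set.mem_setOf_eq, S.v_one]
    exact le_refl _
  add_mem' := by
    intro a b ha hb
    exact le_trans (le_min ha hb) (S.v_add a b)
  mul_mem' := by
    intro a b ha hb
    simp only [Set.mem_setOf_eq, S.v_mul a b]
    exact add_nonneg ha hb
  neg_mem' := by
    intro a ha
    simpa only [Set.mem_setOf_eq, S.v_neg] using ha

lemma mem_intRing {S : Setup K Kbar} {x : Kbar} :
    x ∈ intRing S ↔ (0 : WithTop ℚ) ≤ S.v x := Iff.rfl

/-- The maximal ideal of the valuation ring of `Kbar`. -/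
def maxIdeal (S : Setup K Kbar) : Ideal (intRing S) where
  carrier := {x : intRing S | (0 : WithTop ℚ) < S.v (x : Kbar)}
  zero_mem' := by
    show (0 : WithTop ℚ) < S.v ((0 : intRing S) : Kbar)
    rw [show ((0 : intRing S) : Kbar) = 0 from rfl, (S.v_top_iff 0).mpr rfl]
    exact zero_lt_top'
  add_mem' := by
    intro a b ha hb
    show (0 : WithTop ℚ) < S.v ((a : Kbar) + (b : Kbar))
    exact lt_of_lt_of_le (lt_min ha hb) (S.v_add _ _)
  smul_mem' := by
    intro c x hx
    show (0 : WithTop ℚ) < S.v ((c : Kbar) * (x : Kbar))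
    rw [S.v_mul]
    exact withTop_add_pos c.2 hx

/-- The residue field of `Kbar`; it is an algebraic closure of the residue field `k` of `K`. -/
abbrev Residue (S : Setup K Kbar) : Type _ := intRing S ⧸ maxIdeal S

/-- Reduction to the residue field (with junk value `0` on non-integral elements). -/
noncomputable def red (S : Setup K Kbar) (x : Kbar) : Residue S :=
  if h : (0 : WithTop ℚ) ≤ S.v x then Ideal.Quotient.mk (maxIdeal S) ⟨x, mem_intRing.mpr h⟩
  else 0

/-- The reduction `f̄|_L` of `f` along the edge `L` of its Newton polygon with endpoints
`(i₁, q₁)` and `(i₂, q₂)`, of slope `ρ = nρ / n` where `n` is the denominator of `ρ`;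
`π` is a uniformiser of `K`.  This is the reduction of `π^{-q₁}·(f|_L)(π^{-nρ}·x)`, where
`f|_L (x) = ∑_j a_{n j + i₁} x^j`. -/
noncomputable def redEdge (S : Setup K Kbar) (π : K) (f : K[X])
    (i₁ i₂ : ℕ) (q₁ nρ : ℤ) (n : ℕ) : Polynomial (Residue S) :=
  ∑ j ∈ Finset.range ((i₂ - i₁) / n + 1),
    Polynomial.C (red S (algebraMap K Kbar (f.coeff (n * j + i₁)) *
      (algebraMap K Kbar π) ^ (-(q₁ + (j : ℤ) * nρ)))) * Polynomial.X ^ j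

/-- `f` is NP-regular (`Δ_v`-regular in dimension 1): for every edge `L` of its Newton
polygon, the reduction `f̄|_L` has no multiple roots in the algebraic closure of the residue
field, i.e. is separable. -/
def NPRegular (S : Setup K Kbar) (π : K) (f : K[X]) : Prop :=
  ∀ (s : ℕ) (i : Fin (s + 1) → ℕ) (c : Fin (s + 1) → ℚ),
    IsNPVertices S f s i c →
    ∀ (j : Fin s) (q₁ nρ : ℤ) (n : ℕ),
      (q₁ : ℚ) = c j.castSucc →
      n = (NPslope i c j).den →
      (nρ : ℚ) = (n : ℚ) * NPslope i c j →
      (redEdge S π f (i j.castSucc) (i j.succ) q₁ nρ n).Separable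

/-- The vertex-index function of the Newton polygon of `f(x+w)`, in terms of the sizes of
the clusters `s_1 ⊂ … ⊂ s_{n+1}` centred at `w`; here `t` is the prescribed first index. -/
def vertIdx {n : ℕ} (t : ℕ) (s : Fin (n + 1) → Finset Kbar) : Fin (n + 2) → ℕ :=
  fun j => Fin.cases (motive := fun _ => ℕ) t (fun j' => (s j').card) j

/-- The vertex-value function of the Newton polygon of `f(x+w)`: the vertex over `|s_j|` has
second coordinate `ε_{s_j} - |s_j|·ρ_{s_j}`; `c0` is the prescribed value at the first vertex. -/
def vertVal {n : ℕ} (c0 : ℚ) (s : Fin (n + 1) → Finset Kbar) (ρ ε : Fin (n + 1) → ℚ) :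
    Fin (n + 2) → ℚ :=
  fun j => Fin.cases (motive := fun _ => ℚ) c0 (fun j' => ε j' - ((s j').card : ℚ) * ρ j') j

lemma aux_mult_expand {F : Type*} [Field F] (n : ℕ) (hn : (n : F) ≠ 0) (h : F[X]) (hh : h ≠ 0)
    (x : F) (hx : x ≠ 0) :
    (expand F n h).rootMultiplicity x = h.rootMultiplicity (x ^ n) := by
  obtain ⟨u, hu, hnd⟩ := exists_eq_pow_rootMultiplicity_mul_and_not_dvd h hh (x ^ n)
  set m := h.rootMultiplicity (x ^ n)
  have hdvd : (X - C x) ∣ (X ^ n - C (x ^ n) : F[X]) := by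
    rw [dvd_iff_isRoot]; simp
  obtain ⟨w, hw⟩ := hdvd
  have hwx : w.eval x ≠ 0 := by
    intro h0
    have := congrArg (fun q => (derivative q).eval x) hw
    simp only [derivative_sub, derivative_X_pow, derivative_C, derivative_mul] at this
    simp [h0] at this
    rcases this with h1 | h1
    · exact hn h1
    · exact hx h1.1
  have hux : (expand F n u).eval x ≠ 0 := by
    rw [expand_eval]
    intro h0
    exact hnd (dvd_iff_isRoot.mpr h0)
  have hE : expand F n h = (w ^ m * expand F n u) * (X - C x) ^ m := by
    conv_lhs => rw [hu]
    rw [map_mul, map_pow, map_sub, expand_X, expand_C, hw, mul_pow]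
    ring
  have hev : (w ^ m * expand F n u).eval x ≠ 0 := by
    rw [eval_mul, eval_pow]
    exact mul_ne_zero (pow_ne_zero _ hwx) hux
  have hne : (w ^ m * expand F n u) ≠ 0 := by
    intro h0; rw [h0] at hev; simp at hev
  rw [hE, rootMultiplicity_mul_X_sub_C_pow hne, rootMultiplicity_eq_zero (by simpa [IsRoot] using hev),
    zero_add]

lemma aux_mult_expand' {F : Type*} [Field F] (p e n' : ℕ) (hp : p.Prime) [CharP F p]
    (hn' : ¬ p ∣ n') (h : F[X]) (hh : h ≠ 0) (x : F) (hx : x ≠ 0) :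
    (expand F (p ^ e * n') h).rootMultiplicity x
      = p ^ e * h.rootMultiplicity (x ^ (p ^ e * n')) := by
  have : Fact p.Prime := ⟨hp⟩
  have : ExpChar F p := ExpChar.prime hp
  rw [expand_mul, rootMultiplicity_expand_pow, aux_mult_expand n' _ h hh _ (pow_ne_zero _ hx), pow_mul]
  rwa [Ne, CharP.cast_eq_zero_iff F p]

lemma aux_sep_iff {F ι : Type*} [Field F] (p e n' : ℕ) (hp : p.Prime) [CharP F p]
    (hn' : ¬ p ∣ n') (h : F[X]) (h0 : h.coeff 0 ≠ 0) (R : Finset ι) (y : ι → F) (u : F)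
    (hu : u ≠ 0)
    (hE : expand F (p ^ e * n') h = C u * ∏ r ∈ R, (X - C (y r))) :
    h.Separable ↔ ∀ r ∈ R, (R.filter fun r' => y r' = y r).card ≤ p ^ e := by
  have hn'0 : 0 < n' := by
    rcases Nat.eq_zero_or_pos n' with h1 | h1
    · subst h1; simp at hn'
    · exact h1
  have hn : 0 < p ^ e * n' := Nat.mul_pos (pow_pos hp.pos _) hn'0
  have hh : h ≠ 0 := by rintro rfl; simp at h0
  have hy : ∀ r ∈ R, y r ≠ 0 := by
    intro r hr hyr
    have h1 := congrArg (fun q => q.eval 0) hE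
    simp only [expand_eval, zero_pow hn.ne', eval_mul, eval_prod, eval_C] at h1
    rw [Finset.prod_eq_zero hr (by simp [hyr]), mul_zero, ← coeff_zero_eq_eval_zero] at h1
    exact h0 h1
  have hcount : ∀ r ∈ R, (R.filter fun r' => y r' = y r).card
      = p ^ e * h.rootMultiplicity ((y r) ^ (p ^ e * n')) := by
    intro r hr
    rw [← aux_mult_expand' p e n' hp hn' h hh _ (hy r hr), hE, ← count_roots, roots_C_mul _ hu]
    have : (∏ r ∈ R, (X - C (y r))) = ((R.val.map y).map (fun a => X - C a)).prod := by
      rw [Multiset.map_map]; rfl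
    rw [this, roots_multiset_prod_X_sub_C, Multiset.count_map]
    rw [Finset.card_def, Finset.filter_val]
    congr 1
    exact Multiset.filter_congr (fun a _ => eq_comm)
  have hpe : 0 < p ^ e := pow_pos hp.pos _
  constructor
  · intro hs r hr
    rw [hcount r hr]
    calc _ ≤ p ^ e * 1 := Nat.mul_le_mul_left _ (rootMultiplicity_le_one_of_separable hs _)
      _ = _ := mul_one _
  · intro hR
    rw [← nodup_aroots_iff_of_splits (K := AlgebraicClosure F) hh (IsAlgClosed.splits _),
      Multiset.nodup_iff_count_le_one]
    intro t
    rw [aroots, count_roots]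
    by_contra hlt
    have hroot : (h.map (algebraMap F (AlgebraicClosure F))).IsRoot t := by
      by_contra h1
      rw [rootMultiplicity_eq_zero h1] at hlt
      omega
    obtain ⟨x, hx⟩ := IsAlgClosed.exists_pow_nat_eq t hn
    have h2 := congrArg (fun q => (q.map (algebraMap F (AlgebraicClosure F))).eval x) hE
    simp only [map_expand, expand_eval, hx, Polynomial.map_mul, Polynomial.map_prod, eval_mul,
      eval_prod, map_C, eval_C] at h2
    rw [hroot.eq_zero] at h2
    have h3 := (mul_eq_zero.mp h2.symm).resolve_left (by simpa using hu)
    obtain ⟨r, hr, h4⟩ := Finset.prod_eq_zero_iff.mp h3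
    simp only [Polynomial.map_sub, map_X, map_C, eval_sub, eval_X, eval_C, sub_eq_zero] at h4
    have h5 : t = algebraMap F (AlgebraicClosure F) ((y r) ^ (p ^ e * n')) := by
      rw [← hx, h4, map_pow]
    rw [h5, ← eq_rootMultiplicity_map (algebraMap F (AlgebraicClosure F)).injective] at hlt
    have h6 := hR r hr
    rw [hcount r hr] at h6
    rw [not_le] at hlt
    have h7 := (Nat.mul_lt_mul_left hpe).mpr hlt
    rw [mul_one] at h7
    exact absurd h7 (not_lt.mpr h6)

lemma aux_norm (p : ℕ) (hp : p.Prime) (ρ : ℚ) (e n' : ℕ) (hn' : ¬ p ∣ n')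
    (hden : ρ.den = p ^ e * n') (N : ℕ) :
    (1 < N ∧ padicNorm p ρ < (N : ℚ)) ↔ p ^ e < N := by
  have : Fact p.Prime := ⟨hp⟩
  have hn'0 : n' ≠ 0 := by rintro rfl; simp at hn'
  have hv : padicValNat p ρ.den = e := by
    rw [hden, padicValNat.mul (pow_ne_zero _ hp.ne_zero) hn'0, padicValNat.prime_pow,
      padicValNat.eq_zero_of_not_dvd hn', add_zero]
  rcases Nat.eq_zero_or_pos e with he | he
  · subst he
    rw [pow_zero]
    refine ⟨fun h => h.1, fun h => ⟨h, ?_⟩⟩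
    have : padicNorm p ρ ≤ 1 := by
      rcases eq_or_ne ρ 0 with h0 | h0
      · subst h0; simp
      · rw [padicNorm.eq_zpow_of_nonzero h0, padicValRat_def, hv]
        apply zpow_le_one_of_nonpos₀
        · exact_mod_cast hp.one_lt.le
        · simp
    exact lt_of_le_of_lt this (by exact_mod_cast h)
  · have h0 : ρ ≠ 0 := by
      rintro rfl
      have h1 : p ∣ 1 := by
        rw [show (1 : ℕ) = p ^ e * n' from hden]
        exact Dvd.dvd.mul_right (dvd_pow_self _ he.ne') _
      exact hp.one_lt.ne' (Nat.dvd_one.mp h1)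
    have hpd : p ∣ ρ.den := by
      rw [hden]; exact Dvd.dvd.mul_right (dvd_pow_self _ he.ne') _
    have hnum : padicValInt p ρ.num = 0 := by
      rw [padicValInt]
      apply padicValNat.eq_zero_of_not_dvd
      intro h1
      have := Nat.dvd_gcd h1 hpd
      rw [ρ.reduced] at this
      exact hp.one_lt.ne' (Nat.dvd_one.mp this)
    have : padicNorm p ρ = ((p ^ e : ℕ) : ℚ) := by
      rw [padicNorm.eq_zpow_of_nonzero h0, padicValRat_def, hv, hnum]
      simp
    rw [this]
    constructor
    · intro h; exact_mod_cast h.2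
    · intro h
      refine ⟨lt_of_le_of_lt (Nat.one_le_pow _ _ hp.pos) h, by exact_mod_cast h⟩

lemma v_zero (S : Setup K Kbar) : S.v 0 = ⊤ := (S.v_top_iff 0).mpr rfl

lemma v_sum_pos (S : Setup K Kbar) {ι : Type*} (s : Finset ι) (g : ι → Kbar)
    (h : ∀ i ∈ s, 0 < S.v (g i)) : 0 < S.v (∑ i ∈ s, g i) := by
  apply Finset.sum_induction g (fun x => 0 < S.v x)
  · intro a b ha hb
    exact lt_of_lt_of_le (lt_min ha hb) (S.v_add a b)
  · rw [v_zero]; exact zero_lt_top'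
  · exact h

lemma v_exists (S : Setup K Kbar) (x : Kbar) (hx : x ≠ 0) : ∃ q : ℚ, S.v x = (q : WithTop ℚ) := by
  have : S.v x ≠ ⊤ := fun h => hx ((S.v_top_iff x).mp h)
  lift S.v x to ℚ using this with q hq
  exact ⟨q, rfl⟩

lemma ne_zero_of_v (S : Setup K Kbar) {x : Kbar} {q : ℚ} (hx : S.v x = (q : WithTop ℚ)) :
    x ≠ 0 := by
  rintro rfl
  rw [v_zero] at hx
  exact WithTop.coe_ne_top hx.symm

lemma v_mul_eq (S : Setup K Kbar) {x y : Kbar} {a b : ℚ} (hx : S.v x = (a : WithTop ℚ))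
    (hy : S.v y = (b : WithTop ℚ)) : S.v (x * y) = ((a + b : ℚ) : WithTop ℚ) := by
  rw [S.v_mul, hx, hy]; rfl

lemma v_pow_eq (S : Setup K Kbar) {x : Kbar} {a : ℚ} (hx : S.v x = (a : WithTop ℚ)) (n : ℕ) :
    S.v (x ^ n) = ((n * a : ℚ) : WithTop ℚ) := by
  induction n with
  | zero => simp [S.v_one]
  | succ k ih =>
    rw [pow_succ, v_mul_eq S ih hx]
    congr 1
    push_cast
    ring

lemma v_inv_eq (S : Setup K Kbar) {x : Kbar} {a : ℚ} (hx : S.v x = (a : WithTop ℚ)) :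
    S.v (x⁻¹) = ((-a : ℚ) : WithTop ℚ) := by
  have h0 := ne_zero_of_v S hx
  obtain ⟨b, hb⟩ := v_exists S x⁻¹ (inv_ne_zero h0)
  have h1 := v_mul_eq S hx hb
  rw [mul_inv_cancel₀ h0, S.v_one] at h1
  have h2 : (0 : ℚ) = a + b := by exact_mod_cast h1
  rw [hb]
  congr 1
  linarith

lemma v_zpow_eq (S : Setup K Kbar) {x : Kbar} {a : ℚ} (hx : S.v x = (a : WithTop ℚ)) (n : ℤ) :
    S.v (x ^ n) = ((n * a : ℚ) : WithTop ℚ) := by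
  cases n with
  | ofNat k => simpa using v_pow_eq S hx k
  | negSucc k =>
    rw [zpow_negSucc, v_inv_eq S (v_pow_eq S hx (k + 1))]
    congr 1
    push_cast
    ring

lemma v_integral (S : Setup K Kbar) (g : Kbar[X]) (hg : ∀ m, 0 ≤ S.v (g.coeff m))
    (hl : S.v g.leadingCoeff = 0) (y : Kbar) (hy : g.eval y = 0) : 0 ≤ S.v y := by
  by_contra hneg
  have hy0 : y ≠ 0 := by
    rintro rfl
    rw [v_zero] at hneg
    exact hneg le_top
  obtain ⟨q, hq⟩ := v_exists S y hy0
  have hq0 : q < 0 := by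
    rw [hq, not_le] at hneg
    exact_mod_cast hneg
  rw [eval_eq_sum_range, Finset.sum_range_succ] at hy
  have h1 : g.leadingCoeff
      = -∑ m ∈ Finset.range g.natDegree, g.coeff m * (y⁻¹) ^ (g.natDegree - m) := by
    have h2 : (y⁻¹) ^ g.natDegree * (∑ m ∈ Finset.range g.natDegree, g.coeff m * y ^ m
        + g.coeff g.natDegree * y ^ g.natDegree) = 0 := by rw [hy, mul_zero]
    rw [mul_add, Finset.mul_sum] at h2
    have h3 : (y⁻¹) ^ g.natDegree * (g.coeff g.natDegree * y ^ g.natDegree) = g.leadingCoeff := by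
      rw [leadingCoeff, inv_pow]
      field_simp
    rw [h3] at h2
    rw [← add_eq_zero_iff_eq_neg, add_comm, ← h2]
    congr 1
    apply Finset.sum_congr rfl
    intro m hm
    have hm' : m < g.natDegree := Finset.mem_range.mp hm
    obtain ⟨k, hk⟩ := Nat.exists_eq_add_of_lt hm'
    have : g.natDegree - m = k + 1 := by omega
    have hc : (y⁻¹) ^ m * y ^ m = 1 := by rw [← mul_pow, inv_mul_cancel₀ hy0, one_pow]
    rw [this, hk, show m + k + 1 = m + (k + 1) by ring, pow_add (y⁻¹) m (k + 1)]
    linear_combination (-(g.coeff m * (y⁻¹) ^ (k + 1))) * hc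
  have h4 : 0 < S.v g.leadingCoeff := by
    rw [h1, S.v_neg]
    apply v_sum_pos
    intro m hm
    have hm' : m < g.natDegree := Finset.mem_range.mp hm
    rw [S.v_mul]
    apply withTop_add_pos (hg m)
    rw [v_pow_eq S (v_inv_eq S hq)]
    have : (0 : ℚ) < ((g.natDegree - m : ℕ) : ℚ) := by exact_mod_cast Nat.sub_pos_of_lt hm'
    have : (0 : ℚ) < ((g.natDegree - m : ℕ) : ℚ) * (-q) := mul_pos this (by linarith)
    exact_mod_cast this
  rw [hl] at h4
  exact lt_irrefl _ h4

lemma maxIdeal_isMaximal (S : Setup K Kbar) : (maxIdeal S).IsMaximal := by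
  rw [Ideal.isMaximal_iff]
  constructor
  · intro h
    have h' : (0 : WithTop ℚ) < S.v 1 := h
    rw [S.v_one] at h'
    exact lt_irrefl _ h'
  · intro J x hJ hx hxJ
    have h1 : (0 : WithTop ℚ) ≤ S.v (x : Kbar) := x.2
    have h2 : ¬ (0 : WithTop ℚ) < S.v (x : Kbar) := hx
    have h3 : S.v (x : Kbar) = ((0 : ℚ) : WithTop ℚ) := le_antisymm (not_lt.mp h2) h1
    have h4 := v_inv_eq S h3
    have h5 : ((x : Kbar)⁻¹) ∈ intRing S := by
      rw [mem_intRing, h4]; simp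
    have h6 : (⟨(x : Kbar)⁻¹, h5⟩ : intRing S) * x ∈ J := J.mul_mem_left _ hxJ
    convert h6
    apply Subtype.ext
    exact (inv_mul_cancel₀ (ne_zero_of_v S h3)).symm

lemma red_of_mem (S : Setup K Kbar) (x : intRing S) :
    red S (x : Kbar) = Ideal.Quotient.mk (maxIdeal S) x := by
  have h : (0 : WithTop ℚ) ≤ S.v (x : Kbar) := x.2
  rw [red, dif_pos h]

lemma den_dvd (ρ : ℚ) (m : ℕ) (z : ℤ) (h : (m : ℚ) * ρ = z) : ρ.den ∣ m := by
  have h1 : (m : ℤ) * ρ.num = z * ρ.den := by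
    have h2 : (ρ.den : ℚ) ≠ 0 := by exact_mod_cast ρ.den_nz
    have h3 : ρ * ρ.den = ρ.num := Rat.mul_den_eq_num ρ
    have : (m : ℚ) * ρ.num = z * ρ.den := by rw [← h3, ← h]; ring
    exact_mod_cast this
  have h4 : (ρ.den : ℤ) ∣ m * ρ.num := ⟨z, by rw [h1]; ring⟩
  have h5 : IsCoprime (ρ.den : ℤ) ρ.num := by
    rw [Int.isCoprime_iff_gcd_eq_one]
    have := ρ.reduced
    rw [Nat.Coprime, Nat.gcd_comm] at this
    simpa [Int.gcd] using this
  exact_mod_cast h5.dvd_of_dvd_mul_right h4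

lemma residue_charP (S : Setup K Kbar) (p : ℕ) (hp : p.Prime)
    (hres : ((0 : ℚ) : WithTop ℚ) < S.vK (p : K)) : CharP (Residue S) p := by
  have := maxIdeal_isMaximal S
  have : Nontrivial (Residue S) := Ideal.Quotient.nontrivial_iff.mpr this.ne_top
  obtain ⟨q, hq⟩ := CharP.exists (Residue S)
  have h0 : ((p : ℕ) : Residue S) = 0 := by
    have h1 : ((p : ℕ) : Residue S) = Ideal.Quotient.mk (maxIdeal S) (p : intRing S) := by simp
    rw [h1, Ideal.Quotient.eq_zero_iff_mem]
    show (0 : WithTop ℚ) < S.v (((p : intRing S)) : Kbar)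
    rw [Setup.vK, map_natCast] at hres
    exact_mod_cast hres
  have h2 := (CharP.cast_eq_zero_iff (Residue S) q p).mp h0
  rcases (Nat.dvd_prime hp).mp h2 with h | h
  · subst h
    exact absurd rfl (CharP.char_ne_one (Residue S) 1)
  · subst h; exact hq

lemma redEdge_coeff (S : Setup K Kbar) (π : K) (f : K[X]) (q₁ nρ : ℤ) (n : ℕ) (hn : 0 < n) (j : ℕ) :
    (redEdge S π f 0 f.natDegree q₁ nρ n).coeff j
      = red S (algebraMap K Kbar (f.coeff (n * j)) *
        (algebraMap K Kbar π) ^ (-(q₁ + (j : ℤ) * nρ))) := by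
  rw [redEdge, finset_sum_coeff]
  simp only [coeff_C_mul_X_pow, add_zero, Nat.sub_zero]
  rw [Finset.sum_ite_eq]
  split_ifs with h
  · rfl
  · have h1 : f.natDegree < n * j := by
      rw [Finset.mem_range, not_lt] at h
      calc f.natDegree < n * (f.natDegree / n + 1) := Nat.lt_mul_div_succ _ hn
        _ ≤ n * j := Nat.mul_le_mul_left _ h
    rw [coeff_eq_zero_of_natDegree_lt h1, map_zero, zero_mul]
    have := red_of_mem S 0
    rw [map_zero] at this
    exact this.symm

lemma np_core (S : Setup K Kbar) (π : K) (hπ : S.vK π = ((1 : ℚ) : WithTop ℚ))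
    (p : ℕ) (hp : p.Prime) (hres : ((0 : ℚ) : WithTop ℚ) < S.vK (p : K))
    (f : K[X]) (hsep : f.Separable) (q₁ : ℤ) (qd ρ : ℚ)
    (hq0 : S.vK (f.coeff 0) = ((q₁ : ℚ) : WithTop ℚ))
    (hqd : S.vK (f.coeff f.natDegree) = (qd : WithTop ℚ))
    (hline : qd - q₁ = - (f.natDegree * ρ))
    (habove : ∀ (m : ℕ) (q : ℚ), S.vK (f.coeff m) = (q : WithTop ℚ) → q₁ - m * ρ ≤ q)
    (e n' : ℕ) (hn' : ¬ p ∣ n') (hden : ρ.den = p ^ e * n') :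
    (∀ r ∈ rootFinset (Kbar := Kbar) f, ∀ r' ∈ rootFinset (Kbar := Kbar) f,
      (ρ : WithTop ℚ) ≤ S.v (r' - r)) ∧
    ((redEdge S π f 0 f.natDegree q₁ (-ρ.num) ρ.den).Separable ↔
      ∀ r ∈ rootFinset (Kbar := Kbar) f,
        ((rootFinset (Kbar := Kbar) f).filter
          fun r' => (ρ : WithTop ℚ) < S.v (r' - r)).card ≤ p ^ e) := by
  have hac := S.algClosed
  set P : Kbar := algebraMap K Kbar π with hP
  have hvP : S.v P = ((1 : ℚ) : WithTop ℚ) := hπ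
  have hP0 : P ≠ 0 := ne_zero_of_v S hvP
  obtain ⟨α, hα⟩ := IsAlgClosed.exists_pow_nat_eq (P ^ ρ.num) ρ.den_pos
  have hα0 : α ≠ 0 := by
    rintro rfl
    rw [zero_pow ρ.den_nz] at hα
    exact zpow_ne_zero _ hP0 hα.symm
  have hvα : S.v α = (ρ : WithTop ℚ) := by
    obtain ⟨a, ha⟩ := v_exists S α hα0
    have h1 := v_pow_eq S ha ρ.den
    rw [hα, v_zpow_eq S hvP] at h1
    have h2 : (ρ.num : ℚ) * 1 = ρ.den * a := by exact_mod_cast h1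
    have h3 : (ρ.den : ℚ) ≠ 0 := by exact_mod_cast ρ.den_nz
    have h4 : ρ * ρ.den = ρ.num := Rat.mul_den_eq_num ρ
    rw [ha]
    congr 1
    apply mul_left_cancel₀ h3
    linarith
  set R : Finset Kbar := rootFinset f with hR
  set F := f.map (algebraMap K Kbar) with hF
  set b : ℕ → Kbar := fun m => P ^ (-q₁) * (algebraMap K Kbar (f.coeff m) * α ^ m) with hb
  have hvb : ∀ m (q : ℚ), S.vK (f.coeff m) = (q : WithTop ℚ) →
      S.v (b m) = ((q + m * ρ - q₁ : ℚ) : WithTop ℚ) := by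
    intro m q hq
    rw [hb]
    rw [v_mul_eq S (v_zpow_eq S hvP _) (v_mul_eq S hq (v_pow_eq S hvα m))]
    congr 1
    push_cast
    ring
  have hbnn : ∀ m, 0 ≤ S.v (b m) := by
    intro m
    by_cases h0 : f.coeff m = 0
    · simp [hb, h0, v_zero]
    · obtain ⟨z, hz⟩ := S.v_base_int _ h0
      rw [hvb m z hz]
      have := habove m z hz
      have : (0 : ℚ) ≤ z + m * ρ - q₁ := by linarith
      exact_mod_cast this
  set g : Kbar[X] := C (P ^ (-q₁)) * F.comp (C α * X) with hg
  have hgc : ∀ m, g.coeff m = b m := by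
    intro m
    rw [hg, coeff_C_mul, comp_C_mul_X_coeff, hF, coeff_map]
  -- factorisation
  have hFsplit : F = C F.leadingCoeff * ∏ r ∈ R, (X - C r) := by
    have h1 := (IsAlgClosed.splits F).eq_prod_roots
    have h2 : F.roots.Nodup := nodup_roots (hsep.map)
    conv_lhs => rw [h1]
    congr 1
    rw [hR, rootFinset]
    show _ = (Multiset.map (fun x => X - C x) (Multiset.toFinset F.roots).val).prod
    rw [Multiset.toFinset_val, h2.dedup]
  have hcard : R.card = f.natDegree := by
    have h2 : F.roots.Nodup := nodup_roots (hsep.map)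
    rw [hR, rootFinset, Multiset.toFinset_card_of_nodup h2,
      ← (IsAlgClosed.splits F).natDegree_eq_card_roots, hF, natDegree_map]
  have hlead : F.leadingCoeff = algebraMap K Kbar (f.coeff f.natDegree) := by
    rw [hF, leadingCoeff_map]; rfl
  have hgprod : g = C (b f.natDegree) * ∏ r ∈ R, (X - C (r / α)) := by
    have h1 : ∏ r ∈ R, (C α * X - C r) = C (α ^ f.natDegree) * ∏ r ∈ R, (X - C (r / α)) := by
      rw [← hcard, C_pow, ← Finset.prod_const, ← Finset.prod_mul_distrib]
      apply Finset.prod_congr rfl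
      intro r _
      rw [mul_sub, ← C_mul, mul_div_cancel₀ _ hα0]
    rw [hg, hFsplit, mul_comp, C_comp, prod_comp]
    simp only [sub_comp, X_comp, C_comp]
    rw [h1, hlead, hb]
    simp only [C_mul]
    ring
  have hvu : S.v (b f.natDegree) = 0 := by
    rw [hvb _ _ hqd]
    have : qd + f.natDegree * ρ - q₁ = 0 := by linarith
    rw [this]; rfl
  have hmonic : (∏ r ∈ R, (X - C (r / α)) : Kbar[X]).Monic := monic_prod_X_sub_C _ _
  have hyint : ∀ r ∈ R, 0 ≤ S.v (r / α) := by
    intro r hr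
    apply v_integral S g
    · intro m; rw [hgc]; exact hbnn m
    · rw [hgprod, leadingCoeff_mul, leadingCoeff_C, hmonic.leadingCoeff, mul_one, hvu]
    · rw [hgprod, eval_mul, eval_prod, Finset.prod_eq_zero hr, mul_zero]
      simp
  let y : Kbar → intRing S := fun r => if h : 0 ≤ S.v (r / α) then ⟨r / α, h⟩ else 0
  have hy : ∀ r ∈ R, ((y r : intRing S) : Kbar) = r / α := by
    intro r hr
    simp only [y]
    rw [dif_pos (hyint r hr)]
  have hdiff : ∀ r ∈ R, ∀ r' ∈ R, S.v (r' - r) = (ρ : WithTop ℚ) + S.v ((y r' - y r : intRing S) : Kbar) := by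
    intro r hr r' hr'
    rw [← hvα, ← S.v_mul, AddSubgroupClass.coe_sub, hy r hr, hy r' hr', mul_sub, mul_div_cancel₀ _ hα0,
      mul_div_cancel₀ _ hα0]
  refine ⟨?_, ?_⟩
  · intro r hr r' hr'
    rw [hdiff r hr r' hr']
    exact le_add_of_nonneg_right (y r' - y r).2
  let u : intRing S := ⟨b f.natDegree, hvu.ge⟩
  let G : (intRing S)[X] := C u * ∏ r ∈ R, (X - C (y r))
  have hGmap : G.map (intRing S).subtype = g := by
    rw [hgprod]
    simp only [G, Polynomial.map_mul, Polynomial.map_prod, Polynomial.map_sub, map_X, map_C]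
    congr 1
    apply Finset.prod_congr rfl
    intro r hr
    rw [Subring.subtype_apply, hy r hr]
  have hGc : ∀ m, ((G.coeff m : intRing S) : Kbar) = b m := by
    intro m
    rw [← hgc, ← hGmap, coeff_map]; rfl
  have hmax := maxIdeal_isMaximal S
  letI : Field (Residue S) := Ideal.Quotient.field (maxIdeal S)
  have hchar := residue_charP S p hp hres
  have hcoe : ∀ m, (G.map (Ideal.Quotient.mk (maxIdeal S))).coeff m = red S (b m) := by
    intro m
    rw [coeff_map, ← hGc, red_of_mem]
  have hmul : ∀ j, algebraMap K Kbar (f.coeff (ρ.den * j)) * P ^ (-(q₁ + (j : ℤ) * (-ρ.num)))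
      = b (ρ.den * j) := by
    intro j
    rw [hb]
    simp only
    rw [pow_mul, hα, ← zpow_natCast, ← zpow_mul, mul_left_comm, ← zpow_add₀ hP0]
    congr 2
    ring
  have hunit : ∀ m, S.v (b m) = 0 → red S (b m) ≠ 0 := by
    intro m hm h0
    rw [← hGc, red_of_mem, Ideal.Quotient.eq_zero_iff_mem] at h0
    have h1 : (0 : WithTop ℚ) < S.v ((G.coeff m : intRing S) : Kbar) := h0
    rw [hGc, hm] at h1
    exact lt_irrefl _ h1
  have hexp : expand (Residue S) (p ^ e * n') (redEdge S π f 0 f.natDegree q₁ (-ρ.num) ρ.den)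
      = G.map (Ideal.Quotient.mk (maxIdeal S)) := by
    rw [← hden]
    ext m
    rw [coeff_expand ρ.den_pos, hcoe]
    split_ifs with h
    · obtain ⟨j, rfl⟩ := h
      rw [Nat.mul_div_cancel_left _ ρ.den_pos, redEdge_coeff _ _ _ _ _ _ ρ.den_pos, ← hP, hmul]
    · symm
      rw [← hGc, red_of_mem, Ideal.Quotient.eq_zero_iff_mem]
      show (0 : WithTop ℚ) < S.v ((G.coeff m : intRing S) : Kbar)
      rw [hGc]
      apply lt_of_le_of_ne (hbnn m)
      intro h0
      by_cases h1 : f.coeff m = 0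
      · simp [hb, h1, v_zero] at h0
      · obtain ⟨z, hz⟩ := S.v_base_int _ h1
        rw [hvb m z hz] at h0
        have h2 : (0 : ℚ) = z + m * ρ - q₁ := by exact_mod_cast h0
        apply h
        apply den_dvd ρ m (q₁ - z)
        push_cast
        linarith
  have hc0 : (redEdge S π f 0 f.natDegree q₁ (-ρ.num) ρ.den).coeff 0 ≠ 0 := by
    rw [redEdge_coeff _ _ _ _ _ _ ρ.den_pos, ← hP, hmul]
    apply hunit
    rw [mul_zero, hvb 0 q₁ hq0]
    simp
  have hGm : G.map (Ideal.Quotient.mk (maxIdeal S))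
      = C (Ideal.Quotient.mk (maxIdeal S) u) *
        ∏ r ∈ R, (X - C (Ideal.Quotient.mk (maxIdeal S) (y r))) := by
    simp only [G, Polynomial.map_mul, Polynomial.map_prod, Polynomial.map_sub, map_X, map_C]
  rw [hGm] at hexp
  have hu0 : Ideal.Quotient.mk (maxIdeal S) u ≠ 0 := by
    rw [← red_of_mem]
    exact hunit _ hvu
  rw [aux_sep_iff (F := Residue S) p e n' hp hn' _ hc0 R _ _ hu0 hexp]
  have hfil : ∀ r ∈ R, (R.filter fun r' => Ideal.Quotient.mk (maxIdeal S) (y r')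
      = Ideal.Quotient.mk (maxIdeal S) (y r))
      = R.filter fun r' => (ρ : WithTop ℚ) < S.v (r' - r) := by
    intro r hr
    apply Finset.filter_congr
    intro r' hr'
    rw [Ideal.Quotient.eq, hdiff r hr r' hr']
    show (0 : WithTop ℚ) < S.v ((y r' - y r : intRing S) : Kbar) ↔ _
    generalize S.v ((y r' - y r : intRing S) : Kbar) = w
    induction w using WithTop.recTopCoe with
    | top => simp
    | coe w => 
      rw [← WithTop.coe_add, WithTop.coe_lt_coe, ← WithTop.coe_zero, WithTop.coe_lt_coe]
      constructor <;> intro h <;> linarith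
  constructor
  · intro h r hr
    rw [← hfil r hr]; exact h r hr
  · intro h r hr
    rw [hfil r hr]; exact h r hr

lemma np_unique (S : Setup K Kbar) (f : K[X]) (hdeg : 1 ≤ f.natDegree)
    (q0 qd : ℚ) (hNP : IsNPVertices S f 1 ![0, f.natDegree] ![q0, qd])
    (ρ : ℚ) (hslope : (qd - q0) / (f.natDegree : ℚ) = -ρ)
    (s : ℕ) (i : Fin (s + 1) → ℕ) (c : Fin (s + 1) → ℚ) (hV : IsNPVertices S f s i c)
    (j : Fin s) :
    i j.castSucc = 0 ∧ i j.succ = f.natDegree ∧ c j.castSucc = q0 ∧ NPslope i c j = -ρ := by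
  have hd : (0 : ℚ) < f.natDegree := by exact_mod_cast hdeg
  have hi0 : i 0 = 0 := by
    rw [hV.first]; simpa using hNP.first.symm
  have hil := hV.last
  have hv0 : S.vK (f.coeff 0) = (q0 : WithTop ℚ) := by simpa using hNP.vert 0
  have hvd : S.vK (f.coeff f.natDegree) = (qd : WithTop ℚ) := by simpa using hNP.vert 1
  have hc0 : c 0 = q0 := by
    have := hV.vert 0
    rw [hi0, hv0] at this
    exact_mod_cast this.symm
  have hcl : c (Fin.last s) = qd := by
    have := hV.vert (Fin.last s)
    rw [hil, hvd] at this
    exact_mod_cast this.symm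
  have hqd : qd - q0 = -ρ * f.natDegree := by
    rw [← hslope]; field_simp
  have hsup : ∀ k, q0 - (i k : ℚ) * ρ ≤ c k := by
    intro k
    have h1 := hNP.support 0 (i k) (c k) (hV.vert k)
    simp at h1
    rw [hqd] at h1
    have h2 : (-ρ * (i k : ℚ)) * f.natDegree ≤ (c k - q0) * f.natDegree := by linarith
    have := le_of_mul_le_mul_right h2 hd
    linarith
  obtain ⟨t, rfl⟩ : ∃ t, s = t + 1 := ⟨s - 1, by have := j.2; omega⟩
  have hfirst : -ρ ≤ NPslope i c 0 := by
    have hlt : i (Fin.castSucc 0) < i (Fin.succ 0) := hV.mono (Fin.castSucc_lt_succ)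
    have hlt' : (0 : ℚ) < (i (Fin.succ (0 : Fin (t + 1))) : ℚ) - i (Fin.castSucc (0 : Fin (t + 1))) := by
      rw [sub_pos]; exact_mod_cast hlt
    rw [NPslope, le_div_iff₀ hlt', Fin.castSucc_zero, hc0, hi0]
    have := hsup (Fin.succ 0)
    push_cast
    linarith
  have hlast : NPslope i c (Fin.last t) ≤ -ρ := by
    have hlt : i (Fin.castSucc (Fin.last t)) < i (Fin.succ (Fin.last t)) := hV.mono (Fin.castSucc_lt_succ)
    have hlt' : (0 : ℚ) < (i (Fin.succ (Fin.last t)) : ℚ) - i (Fin.castSucc (Fin.last t)) := by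
      rw [sub_pos]; exact_mod_cast hlt
    rw [NPslope, div_le_iff₀ hlt', Fin.succ_last, hcl, hil]
    have := hsup (Fin.castSucc (Fin.last t))
    linarith
  have ht : Fin.last t ≤ 0 := hV.slope_mono.le_iff_le.mp (hlast.trans hfirst)
  have ht0 : t = 0 := by
    have := Fin.le_def.mp ht
    simpa using this
  subst ht0
  have hj : j = 0 := Fin.ext (by have := j.2; omega)
  subst hj
  refine ⟨hi0, hil, hc0, le_antisymm hlast hfirst⟩

lemma exists_gap {ι : Type*} (T : Finset ι) (g : ι → WithTop ℚ) (ρ : ℚ)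
    (h : ∀ x ∈ T, (ρ : WithTop ℚ) < g x) : ∃ δ : ℚ, ρ < δ ∧ ∀ x ∈ T, (δ : WithTop ℚ) ≤ g x := by
  have h1 : (ρ : WithTop ℚ) < T.inf g := (Finset.lt_inf_iff (WithTop.coe_lt_top ρ)).mpr h
  rcases eq_or_ne (T.inf g) ⊤ with h2 | h2
  · refine ⟨ρ + 1, by linarith, fun x hx => ?_⟩
    have := Finset.inf_le (f := g) hx
    rw [h2, top_le_iff] at this
    rw [this]; exact le_top
  · obtain ⟨a, ha⟩ := WithTop.ne_top_iff_exists.mp h2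
    rw [← ha] at h1
    refine ⟨a, by exact_mod_cast h1, fun x hx => ?_⟩
    rw [ha]; exact Finset.inf_le hx

/-- **NP-regularity of a one-edge polygon via clusters.** Suppose `f(0) ≠ 0` and `NP(f)` is a
single edge of slope `−ρ`. Then `f` is NP-regular iff every proper cluster `s ∈ Σ_f` with
`|s| > |ρ|_p` satisfies `d_s = ρ`. -/
theorem npRegular_single_edge_iff_clusters
    (S : Setup K Kbar) (π : K) (hπ : S.vK π = ((1 : ℚ) : WithTop ℚ))
    (p : ℕ) (hp : p.Prime) (hres : ((0 : ℚ) : WithTop ℚ) < S.vK (p : K))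
    (f : K[X]) (hsep : f.Separable) (hdeg : 1 ≤ f.natDegree) (h0 : f.coeff 0 ≠ 0)
    (q0 qd : ℚ) (hNP : IsNPVertices S f 1 ![0, f.natDegree] ![q0, qd])
    (ρ : ℚ) (hslope : (qd - q0) / (f.natDegree : ℚ) = -ρ) :
    NPRegular S π f ↔
      ∀ s : Finset Kbar, IsCluster S f s → 1 < s.card →
        padicNorm p ρ < (s.card : ℚ) → depth S s = ((ρ : ℚ) : WithTop ℚ) := by
  obtain ⟨e, n', hn', hden⟩ := Nat.exists_eq_pow_mul_and_not_dvd ρ.den_nz p hp.one_lt.ne'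
  have hd : (0 : ℚ) < f.natDegree := by exact_mod_cast hdeg
  have hv0 : S.vK (f.coeff 0) = (q0 : WithTop ℚ) := by simpa using hNP.vert 0
  have hvd : S.vK (f.coeff f.natDegree) = (qd : WithTop ℚ) := by simpa using hNP.vert 1
  have hqd : qd - q0 = -(f.natDegree * ρ) := by
    have : qd - q0 = ((qd - q0) / (f.natDegree : ℚ)) * f.natDegree := by field_simp
    rw [this, hslope]; ring
  have habove : ∀ (m : ℕ) (q : ℚ), S.vK (f.coeff m) = (q : WithTop ℚ) → q0 - m * ρ ≤ q := by
    intro m q hq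
    have h1 := hNP.support 0 m q hq
    simp at h1
    rw [hqd] at h1
    have h2 : (-ρ * (m : ℚ)) * f.natDegree ≤ (q - q0) * f.natDegree := by linarith
    have := le_of_mul_le_mul_right h2 hd
    linarith
  obtain ⟨z0, hz0⟩ := S.v_base_int _ h0
  have hzq : (z0 : ℚ) = q0 := by
    have h1 : ((z0 : ℚ) : WithTop ℚ) = (q0 : WithTop ℚ) := hz0.symm.trans hv0
    exact_mod_cast h1
  subst hzq
  obtain ⟨hge, hcore⟩ := np_core S π hπ p hp hres f hsep z0 qd ρ hv0 hvd hqd habove e n' hn' hden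
  constructor
  · intro H s hs hcard hnorm
    have hpe := (aux_norm p hp ρ e n' hn' hden s.card).mp ⟨hcard, hnorm⟩
    have hsl : NPslope ![0, f.natDegree] ![(z0 : ℚ), qd] 0 = -ρ := by
      rw [← hslope]; simp [NPslope]
    have h1 := H 1 _ _ hNP 0 z0 (-ρ.num) ρ.den (by simp) (by rw [hsl]; simp)
      (by rw [hsl]; push_cast; rw [← Rat.mul_den_eq_num ρ]; ring)
    have h2 := hcore.mp h1
    obtain ⟨hne, zc, δ, hsδ⟩ := hs
    have hsub : ∀ r ∈ s, r ∈ rootFinset (Kbar := Kbar) f := by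
      intro r hr; rw [hsδ] at hr; exact (Finset.mem_filter.mp hr).1
    apply le_antisymm
    · by_contra hlt
      rw [not_le] at hlt
      obtain ⟨r, hr⟩ := hne
      have h3 := h2 r (hsub r hr)
      have h4 : s ⊆ (rootFinset (Kbar := Kbar) f).filter
          fun r' => (ρ : WithTop ℚ) < S.v (r' - r) := by
        intro r' hr'
        rw [Finset.mem_filter]
        refine ⟨hsub r' hr', lt_of_lt_of_le hlt ?_⟩
        exact le_trans (Finset.inf_le hr') (Finset.inf_le (f := fun x => S.v (r' - x)) hr)
      exact absurd (lt_of_lt_of_le hpe (Finset.card_le_card h4)) (not_lt.mpr h3)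
    · apply Finset.le_inf
      intro r hr
      apply Finset.le_inf
      intro r' hr'
      exact hge r' (hsub r' hr') r (hsub r hr)
  · intro H s i c hV j q₁ nρ n e1 e2 e3
    obtain ⟨a1, a2, a3, a4⟩ := np_unique S f hdeg z0 qd hNP ρ hslope s i c hV j
    rw [a1, a2]
    rw [a3] at e1
    rw [a4] at e2 e3
    have e1' : q₁ = z0 := by exact_mod_cast e1
    have e2' : n = ρ.den := by rw [e2]; simp
    have e3' : nρ = -ρ.num := by
      rw [e2'] at e3
      have : (nρ : ℚ) = ((-ρ.num : ℤ) : ℚ) := by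
        rw [e3]; push_cast; rw [← Rat.mul_den_eq_num ρ]; ring
      exact_mod_cast this
    rw [e1', e2', e3', hcore]
    intro r hr
    by_contra hlt
    rw [not_le] at hlt
    set T := (rootFinset (Kbar := Kbar) f).filter
          fun r' => (ρ : WithTop ℚ) < S.v (r' - r) with hT
    have hTm : ∀ x ∈ T, (ρ : WithTop ℚ) < S.v (x - r) := fun x hx => (Finset.mem_filter.mp hx).2
    obtain ⟨δ, hδ, hδT⟩ := exists_gap T (fun x => S.v (x - r)) ρ hTm
    have hcl : IsCluster S f T := by
      refine ⟨Finset.card_pos.mp (by omega), r, δ, ?_⟩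
      rw [hT]
      apply Finset.filter_congr
      intro x hx
      constructor
      · intro h
        exact hδT x (by rw [hT]; exact Finset.mem_filter.mpr ⟨hx, h⟩)
      · intro h
        exact lt_of_lt_of_le (by exact_mod_cast hδ) h
    obtain ⟨b1, b2⟩ := (aux_norm p hp ρ e n' hn' hden T.card).mpr hlt
    have hdep := H T hcl b1 b2
    have hgt : (ρ : WithTop ℚ) < depth S T := by
      rw [depth, Finset.lt_inf_iff (WithTop.coe_lt_top ρ)]
      intro x hx
      rw [Finset.lt_inf_iff (WithTop.coe_lt_top ρ)]
      intro x' hx'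
      have h5 : x - x' = (x - r) + -(x' - r) := by ring
      rw [h5]
      refine lt_of_lt_of_le (lt_min (hTm x hx) ?_) (S.v_add _ _)
      rw [S.v_neg]
      exact hTm x' hx'
    rw [hdep] at hgt
    exact lt_irrefl _ hgt

end ClusterPicture
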